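/- Let P and P̂ be two dynamics on the same countable state-action spaces, let π_D and π be two policies, and set ε_π := sup_{s∈S} D_TV(π_D(·|s), π(·|s)) and, for every t ≥ 1, ε_t^m := E_{(s,a)∼ν_{t-1}^{π,P̂}}[D_TV(P̂(·|s,a), P(·|s,a))] (the expected one-step model error at step t along trajectories generated by π in the model P̂). Then the gap between the true return and the model return satisfies |J_P(π) − J_{P̂}(π)| ≤ (2·R_max/(1−γ)²)·((2−γ)·ε_π + (1−γ)·Σ_{t=1}^∞ γ^t·ε_t^m). -/

import Mathlib

open scoped ENNReal

noncomputable section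

/-- Total variation distance between two probability mass functions on a countable type:
`D_TV(p, q) = (1/2) * Σ_x |p(x) - q(x)|`. -/
def tv {X : Type*} (p q : PMF X) : ℝ :=
  (1 / 2) * ∑' x : X, |(p x).toReal - (q x).toReal|

/-- The state-action distribution at time `t` under initial distribution `ρ0`, policy `π`
and dynamics `P`:  `ν_0(s,a) = ρ0(s)·π(a|s)` and
`ν_{t+1}(s',a') = Σ_{s,a} ν_t(s,a)·P(s'|s,a)·π(a'|s')`. -/
def nu {S A : Type*} (ρ0 : PMF S) (π : S → PMF A) (P : S × A → PMF S) : ℕ → PMF (S × A)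
  | 0 => ρ0.bind fun s => (π s).map fun a => (s, a)
  | (t + 1) => (nu ρ0 π P t).bind fun sa =>
      (P sa).bind fun s' => (π s').map fun a' => (s', a')

/-- The discounted return `J_P(π) = Σ_{t=0}^∞ γ^t · E_{(s,a)∼ν_t^{π,P}}[R(s,a)]`. -/
def J {S A : Type*} (R : S × A → ℝ) (γ : ℝ) (ρ0 : PMF S) (π : S → PMF A)
    (P : S × A → PMF S) : ℝ :=
  ∑' t : ℕ, γ ^ t * ∑' sa : S × A, ((nu ρ0 π P t) sa).toReal * R sa

theorem aux_hasSum {X : Type*} (p : PMF X) : HasSum (fun x => (p x).toReal) 1 := by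
  have h := p.tsum_coe
  have h2 : Summable (fun x => (p x).toReal) := ENNReal.summable_toReal (by rw [h]; simp)
  have h3 : ∑' x, (p x).toReal = 1 := by
    rw [← ENNReal.tsum_toReal_eq (fun x => p.apply_ne_top x), h]; simp
  exact h3 ▸ h2.hasSum

theorem aux_diff {X : Type*} (p q : PMF X) :
    Summable (fun x => |(p x).toReal - (q x).toReal|) :=
  ((aux_hasSum p).summable.sub (aux_hasSum q).summable).abs

/-- The l1 distance. -/
def l1d {X : Type*} (p q : PMF X) : ℝ := ∑' x : X, |(p x).toReal - (q x).toReal|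

theorem l1d_nonneg {X : Type*} (p q : PMF X) : 0 ≤ l1d p q :=
  tsum_nonneg fun _ => abs_nonneg _

theorem l1d_le_two {X : Type*} (p q : PMF X) : l1d p q ≤ 2 := by
  have h := ((aux_hasSum p).add (aux_hasSum q))
  have h2 := (aux_diff p q).tsum_le_tsum (g := fun x => (p x).toReal + (q x).toReal) (fun x => by
    have h1 : 0 ≤ (p x).toReal := ENNReal.toReal_nonneg
    have h2 : 0 ≤ (q x).toReal := ENNReal.toReal_nonneg
    rw [abs_le]; constructor <;> linarith) h.summable
  rw [h.tsum_eq] at h2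
  unfold l1d; linarith

theorem aux_bound {X : Type*} (p : PMF X) (f : X → ℝ) (C : ℝ) (hf : ∀ x, |f x| ≤ C) :
    Summable (fun x => (p x).toReal * f x) := by
  refine Summable.of_norm_bounded ((aux_hasSum p).summable.mul_right C) fun x => ?_
  rw [Real.norm_eq_abs, abs_mul, abs_of_nonneg ENNReal.toReal_nonneg]
  exact mul_le_mul_of_nonneg_left (hf x) ENNReal.toReal_nonneg

theorem aux_le_one {X : Type*} (p : PMF X) (x : X) : |(p x).toReal| ≤ 1 := by
  rw [abs_of_nonneg ENNReal.toReal_nonneg]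
  exact ENNReal.toReal_le_of_le_ofReal zero_le_one (by simpa using p.coe_le_one x)

theorem aux_bind {X Y : Type*} (p : PMF X) (K : X → PMF Y) (y : Y) :
    ((p.bind K) y).toReal = ∑' x, (p x).toReal * (K x y).toReal := by
  rw [PMF.bind_apply, ENNReal.tsum_toReal_eq]
  · simp
  · exact fun x => ENNReal.mul_ne_top (p.apply_ne_top x) ((K x).apply_ne_top y)

theorem aux_expect {X : Type*} (p q : PMF X) (R : X → ℝ) (C : ℝ) (hR : ∀ x, |R x| ≤ C) :
    |∑' x, (p x).toReal * R x - ∑' x, (q x).toReal * R x| ≤ l1d p q * C := by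
  have h1 := aux_bound p R C hR
  have h2 := aux_bound q R C hR
  rw [← h1.tsum_sub h2, l1d, ← tsum_mul_right]
  have h3 := (aux_diff p q).mul_right C
  rw [← Real.norm_eq_abs]
  refine tsum_of_norm_bounded h3.hasSum fun x => ?_
  rw [← sub_mul, Real.norm_eq_abs, abs_mul]
  exact mul_le_mul_of_nonneg_left (hR x) (abs_nonneg _)

theorem l1d_bind {X Y : Type*} (p q : PMF X) (K L : X → PMF Y) :
    l1d (p.bind K) (q.bind L) ≤ l1d p q + ∑' x, (q x).toReal * l1d (K x) (L x) := by
  set f : X × Y → ℝ := fun z => |(p z.1).toReal - (q z.1).toReal| * (K z.1 z.2).toReal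
    + (q z.1).toReal * |(K z.1 z.2).toReal - (L z.1 z.2).toReal| with hf
  have hrow : ∀ x, HasSum (fun y => f (x, y))
      (|(p x).toReal - (q x).toReal| * 1 + (q x).toReal * l1d (K x) (L x)) := fun x =>
    ((aux_hasSum (K x)).mul_left _).add ((aux_diff (K x) (L x)).hasSum.mul_left _)
  have hq : Summable fun x => (q x).toReal * l1d (K x) (L x) :=
    aux_bound q _ 2 fun x => by rw [abs_of_nonneg (l1d_nonneg _ _)]; exact l1d_le_two _ _
  have hsum : Summable f := by
    rw [summable_prod_of_nonneg]
    · refine ⟨fun x => (hrow x).summable, ?_⟩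
      simp_rw [fun x => (hrow x).tsum_eq]
      exact ((aux_diff p q).mul_right 1).add hq
    · intro z
      have := ENNReal.toReal_nonneg (a := q z.1)
      have := ENNReal.toReal_nonneg (a := K z.1 z.2)
      simp only [hf, Pi.zero_apply]; positivity
  have hswap : Summable fun z : Y × X => f (z.2, z.1) :=
    (Equiv.prodComm Y X).summable_iff.mpr hsum
  have key : ∑' y, ∑' x, f (x, y) = l1d p q + ∑' x, (q x).toReal * l1d (K x) (L x) := by
    rw [Summable.tsum_comm (f := fun x y => f (x, y)) hsum]
    simp_rw [fun x => (hrow x).tsum_eq]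
    rw [((aux_diff p q).mul_right 1).tsum_add hq]
    simp [l1d]
  rw [← key]
  refine Summable.tsum_le_tsum (fun y => ?_) (aux_diff _ _) hswap.prod
  rw [aux_bind, aux_bind]
  have h1 := aux_bound p (fun x => (K x y).toReal) 1 fun x => aux_le_one _ _
  have h2 := aux_bound q (fun x => (L x y).toReal) 1 fun x => aux_le_one _ _
  rw [← h1.tsum_sub h2, ← Real.norm_eq_abs]
  refine tsum_of_norm_bounded (hswap.prod_factor y).hasSum fun x => ?_
  have e : (p x).toReal * (K x y).toReal - (q x).toReal * (L x y).toReal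
    = ((p x).toReal - (q x).toReal) * (K x y).toReal
      + (q x).toReal * ((K x y).toReal - (L x y).toReal) := by ring
  rw [e, Real.norm_eq_abs]
  refine (abs_add_le _ _).trans (le_of_eq ?_)
  rw [abs_mul, abs_mul, abs_of_nonneg (ENNReal.toReal_nonneg (a := K x y)),
    abs_of_nonneg (ENNReal.toReal_nonneg (a := q x))]

theorem l1d_self {X : Type*} (p : PMF X) : l1d p p = 0 := by simp [l1d]

theorem l1d_comm {X : Type*} (p q : PMF X) : l1d p q = l1d q p := by
  simp [l1d, abs_sub_comm]

theorem tv_eq {X : Type*} (p q : PMF X) : l1d p q = 2 * tv p q := by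
  simp [l1d, tv]

theorem l1d_step {S A : Type*} (ρ0 : PMF S) (π : S → PMF A) (P Q : S × A → PMF S) (t : ℕ) :
    l1d (nu ρ0 π P (t + 1)) (nu ρ0 π Q (t + 1)) ≤ l1d (nu ρ0 π P t) (nu ρ0 π Q t)
      + 2 * ∑' sa, (nu ρ0 π Q t sa).toReal * tv (Q sa) (P sa) := by
  rw [nu, nu]
  refine (l1d_bind _ _ _ _).trans ?_
  rw [← tsum_mul_left]
  refine add_le_add le_rfl (Summable.tsum_le_tsum (fun sa => ?_) ?_ ?_)
  · have h := l1d_bind (P sa) (Q sa) (fun s' => (π s').map fun a' => (s', a'))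
      (fun s' => (π s').map fun a' => (s', a'))
    simp only [l1d_self, mul_zero, tsum_zero, add_zero] at h
    rw [l1d_comm (P sa) (Q sa), tv_eq (Q sa) (P sa)] at h
    have := mul_le_mul_of_nonneg_left h (ENNReal.toReal_nonneg (a := nu ρ0 π Q t sa))
    linarith
  · exact aux_bound _ _ 2 fun x => by rw [abs_of_nonneg (l1d_nonneg _ _)]; exact l1d_le_two _ _
  · refine (aux_bound (nu ρ0 π Q t) (fun sa => tv (Q sa) (P sa)) 1 fun x => ?_).mul_left 2
    have h1 := tv_eq (Q x) (P x)
    have h2 := l1d_nonneg (Q x) (P x)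
    have h3 := l1d_le_two (Q x) (P x)
    rw [abs_le]; constructor <;> linarith


/-- **Theorem 1 of the paper.**  The gap between the true return and the model return is
bounded by `(2·R_max/(1-γ)²)·((2-γ)·ε_π + (1-γ)·Σ_{t≥1} γ^t·ε_t^m)`. -/
theorem return_gap_bound {S A : Type*} [Countable S] [Countable A]
    (P Phat : S × A → PMF S) (πD π : S → PMF A)
    (R : S × A → ℝ) (Rmax : ℝ) (hR : ∀ sa : S × A, |R sa| ≤ Rmax)
    (γ : ℝ) (hγ0 : 0 ≤ γ) (hγ1 : γ < 1) (ρ0 : PMF S)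
    (επ : ℝ) (hεπ : επ = ⨆ s : S, tv (πD s) (π s))
    (εm : ℕ → ℝ)
    (hεm : ∀ t : ℕ, εm (t + 1) =
      ∑' sa : S × A, ((nu ρ0 π Phat t) sa).toReal * tv (Phat sa) (P sa)) :
    |J R γ ρ0 π P - J R γ ρ0 π Phat| ≤
      2 * Rmax / (1 - γ) ^ 2 *
        ((2 - γ) * επ + (1 - γ) * ∑' t : ℕ, γ ^ (t + 1) * εm (t + 1)) := by
  have htv0 : ∀ {X : Type _} (p q : PMF X), 0 ≤ tv p q := fun p q => by
    have := l1d_nonneg p q; rw [tv_eq] at this; linarith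
  have htv1 : ∀ (p q : PMF S), tv p q ≤ 1 := fun p q => by
    have := l1d_le_two p q; rw [tv_eq] at this; linarith
  have hεπ0 : 0 ≤ επ := by
    rw [hεπ]
    refine Real.iSup_nonneg fun s => ?_
    have := l1d_nonneg (πD s) (π s); rw [tv_eq] at this; linarith
  have hRm : 0 ≤ Rmax := by
    obtain ⟨x, -⟩ := (nu ρ0 π P 0).support_nonempty
    exact (abs_nonneg _).trans (hR x)
  have hg : 0 < 1 - γ := by linarith
  set d : ℕ → ℝ := fun t => l1d (nu ρ0 π P t) (nu ρ0 π Phat t) with hd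
  have hd0 : d 0 = 0 := by simp only [hd, nu]; exact l1d_self _
  have hstep : ∀ t, d (t + 1) ≤ d t + 2 * εm (t + 1) := fun t => by
    rw [hεm]; exact l1d_step ρ0 π P Phat t
  have hgeo := summable_geometric_of_lt_one hγ0 hγ1
  have hε : ∀ t, 0 ≤ εm (t + 1) ∧ εm (t + 1) ≤ 1 := fun t => by
    rw [hεm]
    refine ⟨tsum_nonneg fun x => mul_nonneg ENNReal.toReal_nonneg (htv0 _ _), ?_⟩
    rw [← (aux_hasSum (nu ρ0 π Phat t)).tsum_eq]
    refine Summable.tsum_le_tsum (fun x => mul_le_of_le_one_right ENNReal.toReal_nonneg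
      (htv1 _ _)) ?_ (aux_hasSum _).summable
    exact aux_bound _ _ 1 fun x => by rw [abs_of_nonneg (htv0 _ _)]; exact htv1 _ _
  have hEs : Summable fun t : ℕ => γ ^ (t + 1) * εm (t + 1) := by
    refine Summable.of_nonneg_of_le (fun t => mul_nonneg (by positivity) (hε t).1)
      (fun t => mul_le_of_le_one_right (by positivity) (hε t).2) ((summable_nat_add_iff 1).2 hgeo)
  have hDs : Summable fun t : ℕ => γ ^ t * d t := by
    refine Summable.of_nonneg_of_le (fun t => mul_nonneg (by positivity) (l1d_nonneg _ _))
      (fun t => mul_le_mul_of_nonneg_left (l1d_le_two _ _) (by positivity)) (hgeo.mul_right 2)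
  set E := ∑' t : ℕ, γ ^ (t + 1) * εm (t + 1) with hE
  set D := ∑' t : ℕ, γ ^ t * d t with hD
  have hDE : D ≤ γ * D + 2 * E := by
    have h1 : D = ∑' t : ℕ, γ ^ (t + 1) * d (t + 1) := by
      rw [hD, hDs.tsum_eq_zero_add, hd0]; simp
    refine h1.le.trans ?_
    rw [hD, hE, ← tsum_mul_left, ← tsum_mul_left, ← (hDs.mul_left γ).tsum_add (hEs.mul_left 2)]
    refine Summable.tsum_le_tsum (fun t => ?_) ((summable_nat_add_iff 1).2 hDs)
      ((hDs.mul_left γ).add (hEs.mul_left 2))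
    have := mul_le_mul_of_nonneg_left (hstep t) (pow_nonneg hγ0 (t + 1))
    calc _ ≤ _ := this
      _ = _ := by ring
  have hJs : ∀ Q : S × A → PMF S, Summable fun t : ℕ =>
      γ ^ t * ∑' sa : S × A, ((nu ρ0 π Q t) sa).toReal * R sa := fun Q => by
    refine Summable.of_norm_bounded (hgeo.mul_right Rmax) fun t => ?_
    rw [Real.norm_eq_abs, abs_mul, abs_of_nonneg (pow_nonneg hγ0 t)]
    refine mul_le_mul_of_nonneg_left ?_ (pow_nonneg hγ0 t)
    have h := (aux_hasSum (nu ρ0 π Q t)).mul_right Rmax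
    rw [one_mul] at h
    rw [← Real.norm_eq_abs]
    refine tsum_of_norm_bounded h fun x => ?_
    rw [Real.norm_eq_abs, abs_mul, abs_of_nonneg ENNReal.toReal_nonneg]
    exact mul_le_mul_of_nonneg_left (hR x) ENNReal.toReal_nonneg
  have hJ : |J R γ ρ0 π P - J R γ ρ0 π Phat| ≤ D * Rmax := by
    rw [J, J, ← (hJs P).tsum_sub (hJs Phat), ← Real.norm_eq_abs]
    refine tsum_of_norm_bounded (hDs.hasSum.mul_right Rmax) fun t => ?_
    rw [← mul_sub, Real.norm_eq_abs, abs_mul, abs_of_nonneg (pow_nonneg hγ0 t), mul_assoc]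
    exact mul_le_mul_of_nonneg_left (aux_expect _ _ R Rmax hR) (pow_nonneg hγ0 t)
  have hD2 : D ≤ 2 * E / (1 - γ) := by
    rw [le_div_iff₀ hg]; linarith
  refine hJ.trans ((mul_le_mul_of_nonneg_right hD2 hRm).trans ?_)
  have h1 : 2 * E / (1 - γ) * Rmax = 2 * Rmax / (1 - γ) ^ 2 * ((1 - γ) * E) := by
    field_simp
  rw [h1]
  refine mul_le_mul_of_nonneg_left ?_ (by positivity)
  have : 0 ≤ (2 - γ) * επ := mul_nonneg (by linarith) hεπ0
  linarith
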